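/- Let Ψ(x) = exp(−1/(1 − x²)) for x ∈ (−1, 1) and Ψ(x) = 0 otherwise (the standard bump function). Then Ψ is infinitely differentiable on ℝ, and there exist absolute constants C₁, C₂ > 0 such that sup_{x∈[−1,1]} |Ψ^{(k)}(x)| ≤ C₁·C₂^k·(k!)² for all k ∈ ℕ. -/

import Mathlib

noncomputable def bump (x : ℝ) : ℝ :=
  if x ∈ Set.Ioo (-1 : ℝ) 1 then Real.exp (-1 / (1 - x ^ 2)) else 0

/-!
Partial fractions, `1 / (1 - x²) = 1 / (2 (1 - x)) + 1 / (2 (1 + x))`, write the bump function as a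
product of two affine reparametrizations of `expNegInvGlue`. The Gevrey class of order `2` is stable
under products and affine reparametrizations, so only `expNegInvGlue` has to be estimated. At
`t > 0` one applies Cauchy's estimate to `exp (-z⁻¹)` on the disc of radius `t / 2` around `t`,
where `Re z⁻¹ ≥ 2 / (3 t)`: the resulting `k! (2 / t) ^ k exp (-2 / (3 t))` is at most
`3 ^ k (k!)²`, because `y ^ k exp (-y) ≤ k!`.
-/

open Metric Set
open scoped Nat Topology

section Gevrey

variable {𝕜 E F : Type*} [NontriviallyNormedField 𝕜] [NormedAddCommGroup E] [NormedSpace 𝕜 E]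
  [NormedAddCommGroup F] [NormedSpace 𝕜 F] {s : ℝ}

variable (𝕜) in
/-- Functions of Gevrey class of order `s` on the whole space. The constants in the derivative
bounds are uniform in the point, whereas the usual Gevrey class only asks for uniformity on compact
sets. -/
structure IsGevrey (s : ℝ) (f : E → F) : Prop where
  contDiff : ContDiff 𝕜 (⊤ : ℕ∞) f
  exists_norm_iteratedFDeriv_le : ∃ A : ℝ, 0 < A ∧ ∃ C : ℝ, 0 < C ∧
    ∀ (k : ℕ) (x : E), ‖iteratedFDeriv 𝕜 k f x‖ ≤ A * C ^ k * (k ! : ℝ) ^ s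

namespace IsGevrey

theorem comp_add_const {f : E → F} (hf : IsGevrey 𝕜 s f) (c : E) :
    IsGevrey 𝕜 s fun x ↦ f (x + c) := by
  obtain ⟨A, hA, C, hC, hbound⟩ := hf.exists_norm_iteratedFDeriv_le
  refine ⟨hf.contDiff.comp (contDiff_id.add contDiff_const), A, hA, C, hC, fun k x ↦ ?_⟩
  rw [iteratedFDeriv_comp_add_right]
  exact hbound k (x + c)

theorem comp_continuousLinearMap {G : Type*} [NormedAddCommGroup G] [NormedSpace 𝕜 G] {f : E → F}
    (hf : IsGevrey 𝕜 s f) (L : G →L[𝕜] E) : IsGevrey 𝕜 s (f ∘ L) := by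
  obtain ⟨A, hA, C, hC, hbound⟩ := hf.exists_norm_iteratedFDeriv_le
  refine ⟨hf.contDiff.comp L.contDiff, A, hA, C * (‖L‖ + 1), by positivity, fun k x ↦ ?_⟩
  rw [L.iteratedFDeriv_comp_right hf.contDiff x (mod_cast le_top)]
  calc ‖(iteratedFDeriv 𝕜 k f (L x)).compContinuousLinearMap fun _ ↦ L‖
      ≤ ‖iteratedFDeriv 𝕜 k f (L x)‖ * ‖L‖ ^ k := by
        simpa using (iteratedFDeriv 𝕜 k f (L x)).norm_compContinuousLinearMap_le fun _ ↦ L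
    _ ≤ A * C ^ k * (k ! : ℝ) ^ s * (‖L‖ + 1) ^ k := by
        gcongr
        · exact hbound k (L x)
        · exact le_add_of_nonneg_right zero_le_one
    _ = A * (C * (‖L‖ + 1)) ^ k * (k ! : ℝ) ^ s := by rw [mul_pow]; ring

theorem mul {R : Type*} [NormedRing R] [NormedAlgebra 𝕜 R] {f g : E → R} (hs : 0 ≤ s)
    (hf : IsGevrey 𝕜 s f) (hg : IsGevrey 𝕜 s g) : IsGevrey 𝕜 s fun x ↦ f x * g x := by
  obtain ⟨A, hA, C, hC, hfbound⟩ := hf.exists_norm_iteratedFDeriv_le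
  obtain ⟨B, hB, D, hD, hgbound⟩ := hg.exists_norm_iteratedFDeriv_le
  refine ⟨hf.contDiff.mul hg.contDiff, A * B, by positivity, C + D, by positivity, fun k x ↦ ?_⟩
  have hfactorial {i : ℕ} (hi : i ≤ k) :
      (i ! : ℝ) ^ s * ((k - i)! : ℝ) ^ s ≤ (k ! : ℝ) ^ s := by
    rw [← Real.mul_rpow (by positivity) (by positivity)]
    gcongr
    exact_mod_cast Nat.le_of_dvd k.factorial_pos (Nat.factorial_mul_factorial_dvd_factorial hi)
  calc ‖iteratedFDeriv 𝕜 k (fun x ↦ f x * g x) x‖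
      ≤ ∑ i ∈ Finset.range (k + 1), (k.choose i : ℝ) * ‖iteratedFDeriv 𝕜 i f x‖ *
          ‖iteratedFDeriv 𝕜 (k - i) g x‖ :=
        norm_iteratedFDeriv_mul_le hf.contDiff hg.contDiff x (mod_cast le_top)
    _ ≤ ∑ i ∈ Finset.range (k + 1), (k.choose i : ℝ) * (A * C ^ i * (i ! : ℝ) ^ s) *
          (B * D ^ (k - i) * ((k - i)! : ℝ) ^ s) := by
        gcongr with i
        · exact hfbound i x
        · exact hgbound (k - i) x
    _ = ∑ i ∈ Finset.range (k + 1), A * B * (C ^ i * D ^ (k - i) * k.choose i) *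
          ((i ! : ℝ) ^ s * ((k - i)! : ℝ) ^ s) := by
        refine Finset.sum_congr rfl fun i _ ↦ ?_
        ring
    _ ≤ ∑ i ∈ Finset.range (k + 1), A * B * (C ^ i * D ^ (k - i) * k.choose i) *
          (k ! : ℝ) ^ s := by
        gcongr with i hi
        exact hfactorial (Finset.mem_range_succ_iff.mp hi)
    _ = A * B * (C + D) ^ k * (k ! : ℝ) ^ s := by
        rw [add_pow, Finset.mul_sum, Finset.sum_mul]

end IsGevrey

end Gevrey

theorem iteratedDeriv_re_comp_ofReal {f : ℂ → ℂ} {x : ℝ} (hf : AnalyticAt ℂ f x) (k : ℕ) :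
    iteratedDeriv k (fun y : ℝ ↦ (f y).re) x = (iteratedDeriv k f x).re := by
  induction k generalizing x with
  | zero => simp only [iteratedDeriv_zero]
  | succ k ih =>
    have hnear : iteratedDeriv k (fun y : ℝ ↦ (f y).re) =ᶠ[𝓝 x]
        fun y : ℝ ↦ (iteratedDeriv k f y).re :=
      (Complex.continuous_ofReal.tendsto x |>.eventually hf.eventually_analyticAt).mono fun _ ↦ ih
    have hdiff : DifferentiableAt ℂ (iteratedDeriv k f) x := by
      rw [iteratedDeriv_eq_iterate]
      exact (hf.iterated_deriv k).differentiableAt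
    rw [iteratedDeriv_succ, iteratedDeriv_succ, hnear.deriv_eq]
    exact hdiff.hasDerivAt.real_of_complex.deriv

theorem pow_mul_exp_neg_le_factorial {y : ℝ} (hy : 0 ≤ y) (k : ℕ) :
    y ^ k * Real.exp (-y) ≤ k ! := by
  rw [Real.exp_neg, ← div_eq_mul_inv, div_le_comm₀ (Real.exp_pos y) (by positivity)]
  exact Real.pow_div_factorial_le_exp y hy k

theorem norm_iteratedDeriv_le_of_norm_le_exp_neg {F : Type*} [NormedAddCommGroup F]
    [NormedSpace ℂ F] [CompleteSpace F] {f : ℂ → F} {c : ℂ} {R y : ℝ} (hR : 0 < R) (hy : 0 < y)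
    (hf : DiffContOnCl ℂ f (ball c R)) (hbound : ∀ z ∈ sphere c R, ‖f z‖ ≤ Real.exp (-y)) (k : ℕ) :
    ‖iteratedDeriv k f c‖ ≤ (1 / (R * y)) ^ k * (k ! : ℝ) ^ 2 :=
  calc ‖iteratedDeriv k f c‖
      ≤ k ! * Real.exp (-y) / R ^ k :=
        Complex.norm_iteratedDeriv_le_of_forall_mem_sphere_norm_le k hR hf hbound
    _ = (1 / (R * y)) ^ k * k ! * (y ^ k * Real.exp (-y)) := by
        rw [one_div, inv_pow, mul_pow]
        field_simp
    _ ≤ (1 / (R * y)) ^ k * k ! * k ! := by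
        gcongr
        exact pow_mul_exp_neg_le_factorial hy.le k
    _ = (1 / (R * y)) ^ k * (k ! : ℝ) ^ 2 := by ring

theorem le_re_inv_of_norm_sub_le {z : ℂ} {r : ℝ} (hz : z ≠ 0) (hr : ‖z - r‖ ≤ r) :
    (2 * r)⁻¹ ≤ z⁻¹.re := by
  have hnormSq : 0 < Complex.normSq z := Complex.normSq_pos.mpr hz
  have hdisc : Complex.normSq z ≤ 2 * r * z.re := by
    have hsq := pow_le_pow_left₀ (norm_nonneg _) hr 2
    rw [← Complex.normSq_eq_norm_sq, Complex.normSq_sub] at hsq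
    simp only [Complex.normSq_ofReal, Complex.conj_ofReal, Complex.re_mul_ofReal] at hsq
    linarith
  have hr_pos : 0 < r := by
    refine ((norm_nonneg _).trans hr).lt_of_ne fun h ↦ ?_
    rw [← h] at hdisc
    linarith
  rwa [Complex.inv_re, le_div_iff₀ hnormSq, inv_mul_le_iff₀ (by positivity)]

theorem ne_zero_of_mem_closedBall_half {t : ℝ} (ht : 0 < t) {z : ℂ}
    (hz : z ∈ closedBall (t : ℂ) (t / 2)) : z ≠ 0 := by
  rintro rfl
  rw [mem_closedBall_iff_norm, zero_sub, norm_neg, Complex.norm_of_nonneg ht.le] at hz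
  linarith

theorem norm_exp_neg_inv_le_of_mem_closedBall {t : ℝ} (ht : 0 < t) {z : ℂ}
    (hz : z ∈ closedBall (t : ℂ) (t / 2)) :
    ‖Complex.exp (-z⁻¹)‖ ≤ Real.exp (-(2 / (3 * t))) := by
  have hdisc : ‖z - (3 / 4 * t : ℝ)‖ ≤ 3 / 4 * t :=
    calc ‖z - (3 / 4 * t : ℝ)‖
        = ‖(z - t) + (1 / 4 * t : ℝ)‖ := by push_cast; ring_nf
      _ ≤ ‖z - t‖ + ‖((1 / 4 * t : ℝ) : ℂ)‖ := norm_add_le _ _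
      _ ≤ t / 2 + 1 / 4 * t := by
          rw [Complex.norm_of_nonneg (by positivity)]
          gcongr
          exact mem_closedBall_iff_norm.mp hz
      _ = 3 / 4 * t := by ring
  have hre := le_re_inv_of_norm_sub_le (ne_zero_of_mem_closedBall_half ht hz) hdisc
  rw [Complex.norm_exp, Complex.neg_re, Real.exp_le_exp, neg_le_neg_iff]
  calc 2 / (3 * t) = (2 * (3 / 4 * t))⁻¹ := by field_simp; norm_num
    _ ≤ z⁻¹.re := hre

theorem norm_iteratedDeriv_exp_neg_inv_le {t : ℝ} (ht : 0 < t) (k : ℕ) :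
    ‖iteratedDeriv k (fun z : ℂ ↦ Complex.exp (-z⁻¹)) t‖ ≤ 3 ^ k * (k ! : ℝ) ^ 2 := by
  have hdiff : DifferentiableOn ℂ (fun z : ℂ ↦ Complex.exp (-z⁻¹))
      (closedBall (t : ℂ) (t / 2)) := fun z hz ↦ by
    have hz_ne := ne_zero_of_mem_closedBall_half ht hz
    fun_prop (disch := assumption)
  have hcauchy := norm_iteratedDeriv_le_of_norm_le_exp_neg (half_pos ht)
    (y := 2 / (3 * t)) (by positivity) (hdiff.diffContOnCl_ball le_rfl)
    (fun z hz ↦ norm_exp_neg_inv_le_of_mem_closedBall ht (sphere_subset_closedBall hz)) k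
  rwa [show 1 / (t / 2 * (2 / (3 * t))) = 3 by field_simp] at hcauchy

theorem iteratedDeriv_expNegInvGlue_of_pos {t : ℝ} (ht : 0 < t) (k : ℕ) :
    iteratedDeriv k expNegInvGlue t =
      (iteratedDeriv k (fun z : ℂ ↦ Complex.exp (-z⁻¹)) t).re := by
  have hanalytic : AnalyticAt ℂ (fun z : ℂ ↦ Complex.exp (-z⁻¹)) t := by
    have ht_ne : (t : ℂ) ≠ 0 := mod_cast ht.ne'
    fun_prop (disch := assumption)
  have hglue : expNegInvGlue =ᶠ[𝓝 t] fun y : ℝ ↦ (Complex.exp (-(y : ℂ)⁻¹)).re := by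
    filter_upwards [lt_mem_nhds ht] with y hy
    rw [expNegInvGlue, if_neg hy.not_ge, ← Complex.exp_ofReal_re, Complex.ofReal_neg,
      Complex.ofReal_inv]
  rw [hglue.iteratedDeriv_eq, iteratedDeriv_re_comp_ofReal hanalytic]

theorem iteratedDeriv_expNegInvGlue_of_neg {t : ℝ} (ht : t < 0) (k : ℕ) :
    iteratedDeriv k expNegInvGlue t = 0 := by
  have hzero : expNegInvGlue =ᶠ[𝓝 t] 0 := by
    filter_upwards [gt_mem_nhds ht] with y hy using expNegInvGlue.zero_of_nonpos hy.le
  rw [hzero.iteratedDeriv_eq, iteratedDeriv_const_zero]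

theorem abs_iteratedDeriv_expNegInvGlue_le (k : ℕ) (t : ℝ) :
    |iteratedDeriv k expNegInvGlue t| ≤ 3 ^ k * (k ! : ℝ) ^ 2 := by
  have hcont : Continuous (iteratedDeriv k expNegInvGlue) :=
    expNegInvGlue.contDiff.continuous_iteratedDeriv k le_rfl
  have hne (y : ℝ) (hy : y ∈ ({0}ᶜ : Set ℝ)) :
      |iteratedDeriv k expNegInvGlue y| ≤ 3 ^ k * (k ! : ℝ) ^ 2 := by
    rcases lt_or_gt_of_ne hy with hneg | hpos
    · rw [iteratedDeriv_expNegInvGlue_of_neg hneg, abs_zero]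
      positivity
    · rw [iteratedDeriv_expNegInvGlue_of_pos hpos]
      exact (Complex.abs_re_le_norm _).trans (norm_iteratedDeriv_exp_neg_inv_le hpos k)
  exact le_on_closure hne hcont.abs.continuousOn continuousOn_const (dense_compl_singleton 0 t)

theorem isGevrey_expNegInvGlue : IsGevrey ℝ 2 expNegInvGlue := by
  refine ⟨expNegInvGlue.contDiff, 1, one_pos, 3, by norm_num, fun k t ↦ ?_⟩
  rw [norm_iteratedFDeriv_eq_norm_iteratedDeriv, one_mul, Real.rpow_two]
  exact abs_iteratedDeriv_expNegInvGlue_le k t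

theorem bump_eq_expNegInvGlue_mul_expNegInvGlue (x : ℝ) :
    bump x = expNegInvGlue (-2 * x + 2) * expNegInvGlue (2 * x + 2) := by
  by_cases hx : x ∈ Ioo (-1 : ℝ) 1
  · have hminus : 0 < 1 - x := sub_pos.mpr hx.2
    have hplus : 0 < 1 + x := by linarith [hx.1]
    have hpartial : -1 / (1 - x ^ 2) = -(-2 * x + 2)⁻¹ + -(2 * x + 2)⁻¹ := by
      rw [show 1 - x ^ 2 = (1 - x) * (1 + x) by ring, show -2 * x + 2 = 2 * (1 - x) by ring,
        show 2 * x + 2 = 2 * (1 + x) by ring]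
      field_simp
      ring
    rw [bump, if_pos hx, hpartial, Real.exp_add, expNegInvGlue, if_neg (by linarith),
      expNegInvGlue, if_neg (by linarith)]
  · rw [bump, if_neg hx, eq_comm, mul_eq_zero, expNegInvGlue.zero_iff_nonpos,
      expNegInvGlue.zero_iff_nonpos]
    by_contra! h
    exact hx ⟨by linarith, by linarith⟩

theorem bump_smooth_and_deriv_bound_general : IsGevrey ℝ 2 bump := by
  have glue_affine (a : ℝ) : IsGevrey ℝ 2 fun x : ℝ ↦ expNegInvGlue (a * x + 2) :=
    (isGevrey_expNegInvGlue.comp_add_const 2).comp_continuousLinearMap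
      (ContinuousLinearMap.mul ℝ ℝ a)
  rw [funext bump_eq_expNegInvGlue_mul_expNegInvGlue]
  exact (glue_affine (-2)).mul zero_le_two (glue_affine 2)

/-- The standard bump function is smooth, and its derivatives on [−1,1] satisfy
    a factorial-squared growth bound. -/
theorem bump_smooth_and_deriv_bound :
    ContDiff ℝ (⊤ : ℕ∞) bump
    ∧ ∃ C₁ : ℝ, 0 < C₁ ∧ ∃ C₂ : ℝ, 0 < C₂ ∧
        ∀ k : ℕ, ∀ x ∈ Set.Icc (-1 : ℝ) 1,
          |iteratedDeriv k bump x| ≤ C₁ * C₂ ^ k * (Nat.factorial k : ℝ) ^ 2 := by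
  obtain ⟨hsmooth, C₁, hC₁, C₂, hC₂, hbound⟩ := bump_smooth_and_deriv_bound_general
  refine ⟨hsmooth, C₁, hC₁, C₂, hC₂, fun k x _ ↦ ?_⟩
  simpa only [norm_iteratedFDeriv_eq_norm_iteratedDeriv, Real.norm_eq_abs, Real.rpow_two]
    using hbound k x
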